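/- For all n ≥ 1 and k ≥ 0, the number of self-dual Fishburn matrices of reduced size n with first-row sum k and odd dimension equals the number of row-Fishburn matrices of size n whose last column has sum k; that is, |OM(n,k)| = |RM(n,k)|. -/

import Mathlib

open Finset

/-- Square matrices of nonnegative integers of dimension `m` (0-based indexing). -/
abbrev Mat (m : ℕ) := Matrix (Fin m) (Fin m) ℕ

/-- Upper-triangular: all entries strictly below the main diagonal vanish. -/
def UT {m : ℕ} (M : Mat m) : Prop := ∀ i j : Fin m, (j : ℕ) < (i : ℕ) → M i j = 0

/-- The size of a matrix: the sum of all its entries. -/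
def msize {m : ℕ} (M : Mat m) : ℕ := ∑ i : Fin m, ∑ j : Fin m, M i j

/-- Row `i` contains a nonzero entry. -/
def rowNonzero {m : ℕ} (M : Mat m) (i : Fin m) : Prop := ∃ j, M i j ≠ 0

/-- Column `j` contains a nonzero entry. -/
def colNonzero {m : ℕ} (M : Mat m) (j : Fin m) : Prop := ∃ i, M i j ≠ 0

/-- The dual matrix: transpose along the antidiagonal, `M̄_{i,j} = M_{m+1-j,m+1-i}`. -/
def dual {m : ℕ} (M : Mat m) : Mat m := fun i j => M j.rev i.rev

/-- A matrix is self-dual if it equals its dual. -/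
def SelfDual {m : ℕ} (M : Mat m) : Prop := M = dual M

/-- A Fishburn matrix: upper-triangular, every row and every column contains a
nonzero entry. -/
def IsFishburn {m : ℕ} (M : Mat m) : Prop :=
  UT M ∧ (∀ i, rowNonzero M i) ∧ (∀ j, colNonzero M j)

/-- The reduced size: sum of the entries in NW-cells and diagonal cells
(in 1-based terms, cells `(i,j)` with `i + j ≤ m + 1`). -/
def reducedSize {m : ℕ} (M : Mat m) : ℕ :=
  ∑ i : Fin m, ∑ j : Fin m, if (i : ℕ) + (j : ℕ) + 1 ≤ m then M i j else 0

/-- The reduced matrix: all entries in SE-cells are replaced by zeros. -/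
def reduced {m : ℕ} (M : Mat m) : Mat m :=
  fun i j => if (i : ℕ) + (j : ℕ) + 1 ≤ m then M i j else 0

/-- A super triangular matrix: upper-triangular and all SE-cells are zero. -/
def SuperTri {m : ℕ} (M : Mat m) : Prop :=
  UT M ∧ ∀ i j : Fin m, m < (i : ℕ) + (j : ℕ) + 1 → M i j = 0

/-- The sum of the first row. -/
def firstRowSum {m : ℕ} (M : Mat m) : ℕ :=
  ∑ i : Fin m, ∑ j : Fin m, if (i : ℕ) = 0 then M i j else 0

/-- The sum of the last column. -/
def lastColSum {m : ℕ} (M : Mat m) : ℕ :=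
  ∑ i : Fin m, ∑ j : Fin m, if (j : ℕ) + 1 = m then M i j else 0

/-- The sum of the diagonal cells (cells `(i,j)` with `i + j = m + 1`, 1-based). -/
def diagSum {m : ℕ} (M : Mat m) : ℕ :=
  ∑ i : Fin m, ∑ j : Fin m, if (i : ℕ) + (j : ℕ) + 1 = m then M i j else 0

/-- The sum of the center column (column `k+1` of a matrix of dimension `2k+1`). -/
def centerColSum {m : ℕ} (M : Mat m) : ℕ :=
  ∑ i : Fin m, ∑ j : Fin m, if 2 * (j : ℕ) + 1 = m then M i j else 0

/-- Square matrices of arbitrary dimension. -/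
abbrev SMat := Σ m : ℕ, Mat m

/-- `M(n)`: self-dual Fishburn matrices of reduced size `n`. -/
def Mset (n : ℕ) : Set SMat :=
  {A | IsFishburn A.2 ∧ SelfDual A.2 ∧ reducedSize A.2 = n}

/-- `M(n,k)`: matrices of `M(n)` whose first row has sum `k`. -/
def Mset₂ (n k : ℕ) : Set SMat := {A ∈ Mset n | firstRowSum A.2 = k}

/-- `M(n,k,p)`: matrices of `M(n,k)` whose diagonal cells have sum `p`. -/
def Mset₃ (n k p : ℕ) : Set SMat := {A ∈ Mset₂ n k | diagSum A.2 = p}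

/-- `EM(n,k)`: matrices of `M(n,k)` of even dimension. -/
def EMset (n k : ℕ) : Set SMat := {A ∈ Mset₂ n k | Even A.1}

/-- `OM(n,k)`: matrices of `M(n,k)` of odd dimension. -/
def OMset (n k : ℕ) : Set SMat := {A ∈ Mset₂ n k | Odd A.1}

/-- `RM(n)`: row-Fishburn matrices of size `n`. -/
def RMset (n : ℕ) : Set SMat :=
  {A | UT A.2 ∧ (∀ i, rowNonzero A.2 i) ∧ msize A.2 = n}

/-- `RM(n,k)`: row-Fishburn matrices of size `n` whose last column has sum `k`. -/
def RMset₂ (n k : ℕ) : Set SMat := {A ∈ RMset n | lastColSum A.2 = k}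

/-- `RM(n,k,p)`: matrices of `RM(n,k)` whose first row has sum `p`. -/
def RMset₃ (n k p : ℕ) : Set SMat := {A ∈ RMset₂ n k | firstRowSum A.2 = p}

/-- `SM(n)`: super triangular matrices of size `n` and dimension `2k+1` such that
(a) each of the first `k` columns contains a nonzero entry, and
(b) for `1 ≤ i ≤ k`, row `k+1-i` or column `k+1+i` contains a nonzero entry
(0-based: for `a < k`, row `a` or column `b` with `a + b = 2k` is nonzero). -/
def SMset (n : ℕ) : Set SMat :=
  {A | SuperTri A.2 ∧ msize A.2 = n ∧
    ∃ k : ℕ, A.1 = 2 * k + 1 ∧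
      (∀ j : Fin A.1, (j : ℕ) < k → colNonzero A.2 j) ∧
      (∀ a b : Fin A.1, (a : ℕ) < k → (a : ℕ) + (b : ℕ) = 2 * k →
        rowNonzero A.2 a ∨ colNonzero A.2 b)}

/-- `SM(n,k,p)`: matrices of `SM(n)` whose first row has sum `k` and whose center
column has sum `p`. -/
def SMset₃ (n k p : ℕ) : Set SMat :=
  {A ∈ SMset n | firstRowSum A.2 = k ∧ centerColSum A.2 = p}

/-- `B(n)`: upper-triangular matrices of size `n` in which every row except
possibly the first contains a nonzero entry. -/
def Bset (n : ℕ) : Set SMat :=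
  {A | UT A.2 ∧ (∀ i : Fin A.1, (i : ℕ) ≠ 0 → rowNonzero A.2 i) ∧ msize A.2 = n}

/-- `B(n,k,p)`: matrices of `B(n)` whose first row has sum `p` and whose last
column has sum `k`. -/
def Bset₃ (n k p : ℕ) : Set SMat :=
  {A ∈ Bset n | firstRowSum A.2 = p ∧ lastColSum A.2 = k}

/-!
A self-dual matrix of dimension `2 * K + 1` is determined by its reduced matrix. Cut the latter into
the columns `0, …, K`, forming an array `f`, and the remaining columns, which read from right to
left form an array `g`; both are upper-triangular. The Fishburn condition says that no column of `f`
vanishes and that for each `a < K` row `a` of `f`, row `a` of `g` or column `a` of `g` is nonzero.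

Inserting each nonzero column `b` of `g` to the right of the column `b` of `f`, together with a zero
row below row `b`, gives an upper-triangular matrix without zero columns, of the same size and
first-row sum; its dual is a row-Fishburn matrix. This can be undone, because the inserted rows can
be recognized: scanning upwards from the last row, a zero row is an inserted one exactly when it is
not the last row and the row below it is not an inserted one.
-/

section Blocks

variable {E I J Z : Set ℕ} {b m : ℕ} {α : Type*}

open Classical in
/-- The starting position of block `a` when blocks `0, 1, 2, …` are laid out consecutively, block
`b` occupying two positions if `b ∈ E` and one position otherwise. -/
noncomputable def blockStart (E : Set ℕ) (a : ℕ) : ℕ := a + Nat.count (· ∈ E) a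

/-- The second positions of the blocks of length two. -/
def secondCells (E : Set ℕ) : Set ℕ := (fun b => blockStart E b + 1) '' E

theorem blockStart_zero (E : Set ℕ) : blockStart E 0 = 0 := by
  simp [blockStart]

theorem blockStart_succ_of_mem (h : b ∈ E) : blockStart E (b + 1) = blockStart E b + 2 := by
  rw [blockStart, blockStart, Nat.count_succ, if_pos h]
  ring

theorem blockStart_succ_of_notMem (h : b ∉ E) : blockStart E (b + 1) = blockStart E b + 1 := by
  rw [blockStart, blockStart, Nat.count_succ, if_neg h]
  ring

theorem blockStart_strictMono (E : Set ℕ) : StrictMono (blockStart E) := by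
  classical
  exact fun _ _ h => add_lt_add_of_lt_of_le h (Nat.count_monotone _ h.le)

theorem blockStart_add_one_mem_secondCells : blockStart E b + 1 ∈ secondCells E ↔ b ∈ E := by
  simp [secondCells, (blockStart_strictMono E).injective.eq_iff]

theorem exists_eq_blockStart_or_mem_secondCells (E : Set ℕ) (i : ℕ) :
    (∃ a, i = blockStart E a) ∨ ∃ a ∈ E, i = blockStart E a + 1 := by
  induction i with
  | zero => exact .inl ⟨0, (blockStart_zero E).symm⟩
  | succ i ih =>
    rcases ih with ⟨a, rfl⟩ | ⟨a, ha, rfl⟩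
    · by_cases ha : a ∈ E
      · exact .inr ⟨a, ha, rfl⟩
      · exact .inl ⟨a + 1, (blockStart_succ_of_notMem ha).symm⟩
    · exact .inl ⟨a + 1, (blockStart_succ_of_mem ha).symm⟩

theorem blockStart_ne_add_one (h : b ∈ E) (a : ℕ) : blockStart E a ≠ blockStart E b + 1 := by
  intro hab
  have hb := blockStart_succ_of_mem h
  have h₁ : b < a := (blockStart_strictMono E).lt_iff_lt.1 (by omega)
  have h₂ : a < b + 1 := (blockStart_strictMono E).lt_iff_lt.1 (by omega)
  omega

theorem blockStart_notMem_secondCells (E : Set ℕ) (a : ℕ) : blockStart E a ∉ secondCells E := by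
  rintro ⟨b, hb, hab⟩
  exact blockStart_ne_add_one hb a hab.symm

theorem range_blockStart (E : Set ℕ) : Set.range (blockStart E) = (secondCells E)ᶜ := by
  ext i
  constructor
  · rintro ⟨a, rfl⟩
    exact blockStart_notMem_secondCells E a
  · intro hi
    rcases exists_eq_blockStart_or_mem_secondCells E i with ⟨a, rfl⟩ | ⟨a, ha, rfl⟩
    · exact ⟨a, rfl⟩
    · exact absurd (blockStart_add_one_mem_secondCells.2 ha) hi

theorem secondCells_injective : Function.Injective secondCells := by
  intro E F h
  have hstart : blockStart E = blockStart F :=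
    ((blockStart_strictMono E).range_inj (blockStart_strictMono F)).1 <| by
      rw [range_blockStart, range_blockStart, h]
  ext b
  rw [← blockStart_add_one_mem_secondCells, h, hstart, blockStart_add_one_mem_secondCells]

theorem exists_secondCells_eq (h₀ : 0 ∉ I) (hI : ∀ i ∈ I, i + 1 ∉ I) :
    ∃ E, secondCells E = I := by
  classical
  let next : ℕ → ℕ := fun p => if p + 1 ∈ I then p + 2 else p + 1
  have next_pos {p : ℕ} (hp : p + 1 ∈ I) : next p = p + 2 := if_pos hp
  have next_neg {p : ℕ} (hp : p + 1 ∉ I) : next p = p + 1 := if_neg hp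
  let E : Set ℕ := {a | next^[a] 0 + 1 ∈ I}
  have hE : ∀ a, blockStart E a = next^[a] 0 := by
    intro a
    induction a with
    | zero => exact blockStart_zero E
    | succ a ih =>
      rw [Function.iterate_succ_apply']
      by_cases ha : next^[a] 0 + 1 ∈ I
      · rw [blockStart_succ_of_mem (E := E) ha, ih, next_pos ha]
      · rw [blockStart_succ_of_notMem (E := E) ha, ih, next_neg ha]
  have hnotMem : ∀ a, blockStart E a ∉ I := by
    intro a
    rw [hE]
    cases a with
    | zero => exact h₀
    | succ a =>
      rw [Function.iterate_succ_apply']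
      by_cases ha : next^[a] 0 + 1 ∈ I
      · exact next_pos ha ▸ hI _ ha
      · exact next_neg ha ▸ ha
  have hmem : ∀ a ∈ E, blockStart E a + 1 ∈ I := fun a ha => (hE a).symm ▸ ha
  refine ⟨E, Set.Subset.antisymm (Set.image_subset_iff.2 hmem) fun i hi => ?_⟩
  rcases exists_eq_blockStart_or_mem_secondCells E i with ⟨a, rfl⟩ | ⟨a, ha, rfl⟩
  · exact absurd hi (hnotMem a)
  · exact blockStart_add_one_mem_secondCells.2 ha

/-- `I` consists of the positions selected when the positions below `m` other than `m - 1` are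
scanned from right to left, a position being selected if it lies in `Z` and its right neighbour
has not been selected. -/
def IsGreedySelection (m : ℕ) (Z I : Set ℕ) : Prop := ∀ i, i ∈ I ↔ i + 1 < m ∧ i ∈ Z ∧ i + 1 ∉ I

theorem IsGreedySelection.unique (hI : IsGreedySelection m Z I) (hJ : IsGreedySelection m Z J) :
    I = J := by
  have key : ∀ d i, m ≤ i + d → (i ∈ I ↔ i ∈ J) := by
    intro d
    induction d with
    | zero =>
      intro i hi
      rw [hI, hJ]
      exact iff_of_false (fun h => by omega) (fun h => by omega)
    | succ d ih =>
      intro i hi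
      rw [hI, hJ, ih (i + 1) (by omega)]
  ext i
  exact key m i (Nat.le_add_left m i)

theorem exists_isGreedySelection (m : ℕ) (Z : Set ℕ) : ∃ I, IsGreedySelection m Z I := by
  induction m generalizing Z with
  | zero => exact ⟨∅, fun i => by simp⟩
  | succ m ih =>
    obtain ⟨I, hI⟩ := ih {i | i + 1 ∈ Z}
    refine ⟨{i | Nat.casesOn i (1 < m + 1 ∧ 0 ∈ Z ∧ 0 ∉ I) (· ∈ I)}, fun i => ?_⟩
    cases i with
    | zero => rfl
    | succ i =>
      change i ∈ I ↔ i + 1 + 1 < m + 1 ∧ i ∈ {i | i + 1 ∈ Z} ∧ i + 1 ∉ I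
      rw [Nat.add_lt_add_iff_right]
      exact hI i

/-- The sequence which places on each block `b` the entry `u b` followed, if `b ∈ E`, by `v b`. -/
noncomputable def interleave (E : Set ℕ) (u v : ℕ → α) : ℕ → α :=
  -- The outer default `u` is never reached, since the blocks cover all positions.
  Function.extend (blockStart E) u (Function.extend (fun b => blockStart E b + 1) v u)

theorem interleave_blockStart (E : Set ℕ) (u v : ℕ → α) (b : ℕ) :
    interleave E u v (blockStart E b) = u b :=
  (blockStart_strictMono E).injective.extend_apply ..

theorem interleave_blockStart_add_one (hb : b ∈ E) (u v : ℕ → α) :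
    interleave E u v (blockStart E b + 1) = v b := by
  have hinj : Function.Injective fun b => blockStart E b + 1 :=
    (add_left_injective 1).comp (blockStart_strictMono E).injective
  rw [interleave, Function.extend_apply' _ _ _ fun ⟨a, ha⟩ => blockStart_ne_add_one hb a ha]
  exact hinj.extend_apply v u b

theorem eq_interleave {u v w : ℕ → α} (hu : ∀ b, w (blockStart E b) = u b)
    (hv : ∀ b ∈ E, w (blockStart E b + 1) = v b) : w = interleave E u v := by
  funext i
  rcases exists_eq_blockStart_or_mem_secondCells E i with ⟨b, rfl⟩ | ⟨b, hb, rfl⟩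
  · rw [hu, interleave_blockStart]
  · rw [hv b hb, interleave_blockStart_add_one hb]

theorem sum_interleave [AddCommMonoid α] {u v : ℕ → α} (hv : ∀ b ∉ E, v b = 0) (N : ℕ) :
    ∑ i ∈ range (blockStart E N), interleave E u v i = ∑ b ∈ range N, (u b + v b) := by
  induction N with
  | zero => simp [blockStart_zero]
  | succ N ih =>
    rw [sum_range_succ _ N, ← ih]
    by_cases hN : N ∈ E
    · rw [blockStart_succ_of_mem hN, sum_range_succ, sum_range_succ, interleave_blockStart,
        interleave_blockStart_add_one hN, add_assoc]
    · rw [blockStart_succ_of_notMem hN, sum_range_succ, interleave_blockStart, hv N hN, add_zero]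

end Blocks

section Arrays

variable {E : Set ℕ} {K m n k : ℕ} {f g t : ℕ → ℕ → ℕ}

/-- The infinite array `t` is the extension by zero of an upper-triangular `m × m` matrix. -/
def IsUpperArray (m : ℕ) (t : ℕ → ℕ → ℕ) : Prop := ∀ ⦃a b⦄, t a b ≠ 0 → a ≤ b ∧ b < m

/-- The array `t` is the extension by zero of an upper-triangular `m × m` matrix of size `n` with
first-row sum `k` in which each column contains a nonzero entry: the dual of a matrix of
`RM(n,k)`. -/
structure IsColumnFishburn (n k m : ℕ) (t : ℕ → ℕ → ℕ) : Prop where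
  upper : IsUpperArray m t
  col : ∀ b < m, ∃ a, t a b ≠ 0
  size : ∑ a ∈ range m, ∑ b ∈ range m, t a b = n
  first : ∑ b ∈ range m, t 0 b = k

/-- The indices of the nonzero columns of an array. -/
def nonzeroCols (g : ℕ → ℕ → ℕ) : Set ℕ := {b | ∃ a, g a b ≠ 0}

/-- The left half `f` and the right half `g` of the reduced matrix of an element of `OM(n,k)` of
dimension `2 * K + 1`. The center column belongs to `f`, and the columns of `g` are numbered from
right to left, which makes both halves upper-triangular. -/
structure IsHalfPair (n k K : ℕ) (f g : ℕ → ℕ → ℕ) : Prop where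
  left_upper : IsUpperArray (K + 1) f
  right_upper : IsUpperArray K g
  col : ∀ b ≤ K, ∃ a, f a b ≠ 0
  row : ∀ a < K, f a ≠ 0 ∨ g a ≠ 0 ∨ a ∈ nonzeroCols g
  size : ∑ a ∈ range (K + 1), ∑ b ∈ range (K + 1), (f a b + g a b) = n
  first : ∑ b ∈ range (K + 1), (f 0 b + g 0 b) = k

/-- The array obtained from `f` by inserting after each column `b ∈ E` the column `b` of `g`, and
after each row `b ∈ E` a row of zeros. -/
noncomputable def insertCols (E : Set ℕ) (f g : ℕ → ℕ → ℕ) : ℕ → ℕ → ℕ :=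
  interleave E (fun a => interleave E (f a) (g a)) 0

/-- The array `f` of which `t = insertCols E f g` is made. -/
noncomputable def oldCols (E : Set ℕ) (t : ℕ → ℕ → ℕ) : ℕ → ℕ → ℕ :=
  fun a b => t (blockStart E a) (blockStart E b)

/-- The array `g` of which `t = insertCols E f g` is made. -/
noncomputable def newCols (E : Set ℕ) (t : ℕ → ℕ → ℕ) : ℕ → ℕ → ℕ :=
  fun a => E.indicator fun b => t (blockStart E a) (blockStart E b + 1)

theorem IsUpperArray.eq_zero_of_le_col {a b : ℕ} (h : IsUpperArray m t) (hb : m ≤ b) :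
    t a b = 0 :=
  not_not.1 fun hne => hb.not_gt (h hne).2

theorem IsUpperArray.eq_zero_of_le_row {a : ℕ} (h : IsUpperArray m t) (ha : m ≤ a) :
    t a = 0 :=
  funext fun _ => not_not.1 fun hne => ha.not_gt ((h hne).1.trans_lt (h hne).2)

theorem eq_zero_of_notMem_nonzeroCols {b : ℕ} (hb : b ∉ nonzeroCols g) (a : ℕ) : g a b = 0 :=
  not_not.1 fun h => hb ⟨a, h⟩

theorem insertCols_blockStart (E : Set ℕ) (f g : ℕ → ℕ → ℕ) (a : ℕ) :
    insertCols E f g (blockStart E a) = interleave E (f a) (g a) :=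
  interleave_blockStart ..

theorem insertCols_blockStart_add_one {a : ℕ} (ha : a ∈ E) (f g : ℕ → ℕ → ℕ) :
    insertCols E f g (blockStart E a + 1) = 0 :=
  interleave_blockStart_add_one ha ..

theorem oldCols_insertCols (E : Set ℕ) (f g : ℕ → ℕ → ℕ) : oldCols E (insertCols E f g) = f := by
  funext a b
  rw [oldCols, insertCols_blockStart, interleave_blockStart]

theorem newCols_insertCols (hE : nonzeroCols g ⊆ E) : newCols E (insertCols E f g) = g := by
  funext a b
  by_cases hb : b ∈ E
  · rw [newCols, Set.indicator_of_mem hb, insertCols_blockStart, interleave_blockStart_add_one hb]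
  · rw [newCols, Set.indicator_of_notMem hb, eq_zero_of_notMem_nonzeroCols (mt (@hE b) hb)]

theorem insertCols_oldCols_newCols (ht : ∀ i ∈ secondCells E, t i = 0) :
    insertCols E (oldCols E t) (newCols E t) = t := by
  refine (eq_interleave (fun a => ?_) fun a ha => ht _ ⟨a, ha, rfl⟩).symm
  exact eq_interleave (fun b => rfl) fun b hb => by rw [newCols, Set.indicator_of_mem hb]

theorem sum_insertCols_blockStart (hE : nonzeroCols g ⊆ E) (N a : ℕ) :
    ∑ j ∈ range (blockStart E N), insertCols E f g (blockStart E a) j =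
      ∑ b ∈ range N, (f a b + g a b) := by
  rw [insertCols_blockStart]
  exact sum_interleave (fun b hb => eq_zero_of_notMem_nonzeroCols (mt (@hE b) hb) a) N

theorem sum_sum_insertCols (hE : nonzeroCols g ⊆ E) (N : ℕ) :
    ∑ i ∈ range (blockStart E N), ∑ j ∈ range (blockStart E N), insertCols E f g i j =
      ∑ a ∈ range N, ∑ b ∈ range N, (f a b + g a b) := by
  have hrows : ∑ i ∈ range (blockStart E N), insertCols E f g i =
      ∑ a ∈ range N, insertCols E f g (blockStart E a) := by
    simp only [insertCols_blockStart]
    exact (sum_interleave (fun _ _ => rfl) N).trans (by simp only [add_zero])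
  calc
    _ = ∑ j ∈ range (blockStart E N), ∑ a ∈ range N, insertCols E f g (blockStart E a) j := by
      rw [sum_comm]
      simp only [← Finset.sum_apply, hrows]
    _ = _ := by
      rw [sum_comm]
      exact sum_congr rfl fun a _ => sum_insertCols_blockStart hE N a

theorem IsHalfPair.lt_of_mem_nonzeroCols (h : IsHalfPair n k K f g) {b : ℕ}
    (hb : b ∈ nonzeroCols g) : b < K :=
  let ⟨_, ha⟩ := hb
  (h.right_upper ha).2

theorem IsHalfPair.isUpperArray_insertCols (h : IsHalfPair n k K f g) :
    IsUpperArray (blockStart (nonzeroCols g) (K + 1)) (insertCols (nonzeroCols g) f g) := by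
  intro i j hij
  have hmono := blockStart_strictMono (nonzeroCols g)
  rcases exists_eq_blockStart_or_mem_secondCells (nonzeroCols g) i with ⟨a, rfl⟩ | ⟨a, ha, rfl⟩
  · rw [insertCols_blockStart] at hij
    rcases exists_eq_blockStart_or_mem_secondCells (nonzeroCols g) j with ⟨b, rfl⟩ | ⟨b, hb, rfl⟩
    · rw [interleave_blockStart] at hij
      obtain ⟨hab, hbK⟩ := h.left_upper hij
      exact ⟨hmono.monotone hab, hmono hbK⟩
    · rw [interleave_blockStart_add_one hb] at hij
      obtain ⟨hab, hbK⟩ := h.right_upper hij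
      have h₁ := hmono.monotone hab
      have h₂ := hmono (Nat.add_lt_add_right hbK 1)
      rw [blockStart_succ_of_mem hb] at h₂
      omega
  · exact absurd (congrFun (insertCols_blockStart_add_one ha f g) j) hij

theorem IsHalfPair.isColumnFishburn_insertCols (h : IsHalfPair n k K f g) :
    IsColumnFishburn n k (blockStart (nonzeroCols g) (K + 1))
      (insertCols (nonzeroCols g) f g) where
  upper := h.isUpperArray_insertCols
  col j hj := by
    rcases exists_eq_blockStart_or_mem_secondCells (nonzeroCols g) j with ⟨b, rfl⟩ | ⟨b, hb, rfl⟩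
    · have hbK := (blockStart_strictMono _).lt_iff_lt.1 hj
      obtain ⟨a, ha⟩ := h.col b (Nat.le_of_lt_succ hbK)
      exact ⟨blockStart _ a, by rwa [insertCols_blockStart, interleave_blockStart]⟩
    · obtain ⟨a, ha⟩ := id hb
      exact ⟨blockStart _ a, by rwa [insertCols_blockStart, interleave_blockStart_add_one hb]⟩
  size := (sum_sum_insertCols subset_rfl _).trans h.size
  first := by
    have hrow := sum_insertCols_blockStart (f := f) (E := nonzeroCols g) subset_rfl (K + 1) 0
    rw [blockStart_zero] at hrow
    exact hrow.trans h.first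

theorem insertCols_blockStart_eq_zero (hE : nonzeroCols g ⊆ E) {a : ℕ} :
    insertCols E f g (blockStart E a) = 0 ↔ f a = 0 ∧ g a = 0 := by
  constructor
  · intro h
    have hf : oldCols E (insertCols E f g) a = 0 := funext fun b => congrFun h _
    have hg : newCols E (insertCols E f g) a = 0 := by
      rw [newCols, h]
      exact Set.indicator_zero ℕ E
    rw [oldCols_insertCols] at hf
    rw [newCols_insertCols hE] at hg
    exact ⟨hf, hg⟩
  · rintro ⟨hf, hg⟩
    rw [insertCols_blockStart, hf, hg]
    exact (eq_interleave (w := (0 : ℕ → ℕ)) (fun _ => rfl) fun _ _ => rfl).symm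

/-- A zero row which is followed by a row of `f` is either inserted or the row `a` of `f` for some
`a` outside `nonzeroCols g`, and `IsHalfPair.row` excludes the latter. -/
theorem IsHalfPair.isGreedySelection (h : IsHalfPair n k K f g) :
    IsGreedySelection (blockStart (nonzeroCols g) (K + 1))
      {i | insertCols (nonzeroCols g) f g i = 0} (secondCells (nonzeroCols g)) := by
  intro i
  have hmono := blockStart_strictMono (nonzeroCols g)
  rcases exists_eq_blockStart_or_mem_secondCells (nonzeroCols g) i with ⟨a, rfl⟩ | ⟨a, ha, rfl⟩
  · refine iff_of_false (blockStart_notMem_secondCells _ a) fun ⟨hlt, hzero, hnext⟩ => ?_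
    rw [blockStart_add_one_mem_secondCells] at hnext
    rw [← blockStart_succ_of_notMem hnext, hmono.lt_iff_lt, Nat.add_lt_add_iff_right] at hlt
    obtain ⟨hf, hg⟩ := (insertCols_blockStart_eq_zero subset_rfl).1 hzero
    exact (h.row a hlt).elim (· hf) fun h' => h'.elim (· hg) hnext
  · have hstart := blockStart_succ_of_mem ha
    refine iff_of_true (blockStart_add_one_mem_secondCells.2 ha)
      ⟨?_, insertCols_blockStart_add_one ha f g, ?_⟩
    · exact hstart ▸ hmono (Nat.add_lt_add_right (h.lt_of_mem_nonzeroCols ha) 1)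
    · exact hstart ▸ blockStart_notMem_secondCells _ (a + 1)

theorem IsColumnFishburn.row_zero_ne_zero (h : IsColumnFishburn n k m t) (hm : 0 < m) :
    t 0 ≠ 0 := by
  obtain ⟨a, ha⟩ := h.col 0 hm
  obtain rfl : a = 0 := Nat.le_zero.1 (h.upper ha).1
  exact fun h₀ => ha (congrFun h₀ 0)

theorem IsColumnFishburn.exists_isGreedySelection (h : IsColumnFishburn n k m t) (hm : 0 < m) :
    ∃ E K, m = blockStart E (K + 1) ∧ IsGreedySelection m {i | t i = 0} (secondCells E) := by
  obtain ⟨I, hI⟩ := _root_.exists_isGreedySelection m {i | t i = 0}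
  obtain ⟨E, rfl⟩ : ∃ E, secondCells E = I :=
    exists_secondCells_eq (fun h₀ => h.row_zero_ne_zero hm ((hI 0).1 h₀).2.1)
      fun i hi => ((hI i).1 hi).2.2
  obtain ⟨N, rfl⟩ : m ∈ Set.range (blockStart E) := by
    rw [range_blockStart]
    intro hmem
    have := ((hI m).1 hmem).1
    omega
  obtain ⟨K, rfl⟩ : ∃ K, N = K + 1 :=
    Nat.exists_eq_succ_of_ne_zero fun hN => by simp [hN, blockStart_zero] at hm
  exact ⟨E, K, rfl, hI⟩

theorem IsGreedySelection.row_eq_zero {I : Set ℕ} (hI : IsGreedySelection m {i | t i = 0} I) :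
    ∀ i ∈ I, t i = 0 :=
  fun i hi => ((hI i).1 hi).2.1

theorem IsGreedySelection.lt_of_mem {Z : Set ℕ} {b : ℕ}
    (hE : IsGreedySelection (blockStart E (K + 1)) Z (secondCells E)) (hb : b ∈ E) : b < K := by
  have hlt := ((hE _).1 (blockStart_add_one_mem_secondCells.2 hb)).1
  rw [add_assoc, ← blockStart_succ_of_mem hb, (blockStart_strictMono E).lt_iff_lt] at hlt
  exact Nat.lt_of_succ_lt_succ hlt

theorem IsColumnFishburn.exists_blockStart_ne_zero (h : IsColumnFishburn n k m t)
    (ht : ∀ i ∈ secondCells E, t i = 0) {j : ℕ} (hj : j < m) :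
    ∃ a, t (blockStart E a) j ≠ 0 := by
  obtain ⟨i, hi⟩ := h.col j hj
  rcases exists_eq_blockStart_or_mem_secondCells E i with ⟨a, rfl⟩ | ⟨a, ha, rfl⟩
  · exact ⟨a, hi⟩
  · exact absurd (congrFun (ht _ ⟨a, ha, rfl⟩) j) hi

theorem nonzeroCols_newCols_subset (E : Set ℕ) (t : ℕ → ℕ → ℕ) : nonzeroCols (newCols E t) ⊆ E :=
  fun _ ⟨_, ha⟩ => Set.mem_of_indicator_ne_zero ha

theorem IsColumnFishburn.nonzeroCols_newCols (h : IsColumnFishburn n k (blockStart E (K + 1)) t)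
    (hE : IsGreedySelection (blockStart E (K + 1)) {i | t i = 0} (secondCells E)) :
    nonzeroCols (newCols E t) = E := by
  refine (nonzeroCols_newCols_subset E t).antisymm fun b hb => ?_
  have hlt := ((hE _).1 (blockStart_add_one_mem_secondCells.2 hb)).1
  obtain ⟨a, ha⟩ := h.exists_blockStart_ne_zero hE.row_eq_zero (Nat.lt_of_succ_lt hlt)
  exact ⟨a, by rwa [newCols, Set.indicator_of_mem hb]⟩

theorem IsColumnFishburn.isUpperArray_oldCols
    (h : IsColumnFishburn n k (blockStart E (K + 1)) t) : IsUpperArray (K + 1) (oldCols E t) := by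
  intro a b hab
  have := h.upper hab
  rwa [(blockStart_strictMono E).le_iff_le, (blockStart_strictMono E).lt_iff_lt] at this

theorem IsColumnFishburn.isUpperArray_newCols
    (h : IsColumnFishburn n k (blockStart E (K + 1)) t)
    (hE : IsGreedySelection (blockStart E (K + 1)) {i | t i = 0} (secondCells E)) :
    IsUpperArray K (newCols E t) := by
  intro a b hab
  have hb : b ∈ E := Set.mem_of_indicator_ne_zero hab
  rw [newCols, Set.indicator_of_mem hb] at hab
  have hlt : blockStart E a < blockStart E (b + 1) := by
    rw [blockStart_succ_of_mem hb]
    exact Nat.lt_succ_of_le (h.upper hab).1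
  exact ⟨Nat.le_of_lt_succ ((blockStart_strictMono E).lt_iff_lt.1 hlt), hE.lt_of_mem hb⟩

theorem IsColumnFishburn.isHalfPair (h : IsColumnFishburn n k (blockStart E (K + 1)) t)
    (hE : IsGreedySelection (blockStart E (K + 1)) {i | t i = 0} (secondCells E)) :
    IsHalfPair n k K (oldCols E t) (newCols E t) where
  left_upper := h.isUpperArray_oldCols
  right_upper := h.isUpperArray_newCols hE
  col b hb := h.exists_blockStart_ne_zero hE.row_eq_zero
    (blockStart_strictMono E (Nat.lt_succ_of_le hb))
  row a ha := by
    rw [h.nonzeroCols_newCols hE]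
    by_contra! hrow
    obtain ⟨hf, hg, haE⟩ := hrow
    have hzero : t (blockStart E a) = 0 := by
      rw [← insertCols_oldCols_newCols hE.row_eq_zero]
      exact (insertCols_blockStart_eq_zero (nonzeroCols_newCols_subset E t)).2 ⟨hf, hg⟩
    have hlt : blockStart E a + 1 < blockStart E (K + 1) := by
      rw [← blockStart_succ_of_notMem haE]
      exact blockStart_strictMono E (Nat.add_lt_add_right ha 1)
    exact blockStart_notMem_secondCells E a
      ((hE _).2 ⟨hlt, hzero, mt blockStart_add_one_mem_secondCells.1 haE⟩)
  size := by
    rw [← sum_sum_insertCols (nonzeroCols_newCols_subset E t),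
      insertCols_oldCols_newCols hE.row_eq_zero, h.size]
  first := by
    rw [← sum_insertCols_blockStart (nonzeroCols_newCols_subset E t),
      insertCols_oldCols_newCols hE.row_eq_zero, blockStart_zero, h.first]

theorem IsHalfPair.eq_of_insertCols_eq {K' : ℕ} {f' g' : ℕ → ℕ → ℕ} {n' k' : ℕ}
    (h : IsHalfPair n k K f g) (h' : IsHalfPair n' k' K' f' g')
    (hm : blockStart (nonzeroCols g) (K + 1) = blockStart (nonzeroCols g') (K' + 1))
    (ht : insertCols (nonzeroCols g) f g = insertCols (nonzeroCols g') f' g') :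
    K = K' ∧ f = f' ∧ g = g' := by
  have hE : nonzeroCols g = nonzeroCols g' :=
    secondCells_injective (h.isGreedySelection.unique (hm ▸ ht ▸ h'.isGreedySelection))
  refine ⟨?_, ?_, ?_⟩
  · rw [hE] at hm
    exact Nat.succ_injective ((blockStart_strictMono _).injective hm)
  · rw [← oldCols_insertCols (nonzeroCols g) f g, ht, hE, oldCols_insertCols]
  · rw [← newCols_insertCols (f := f) (g := g) subset_rfl, ht, hE, newCols_insertCols subset_rfl]

theorem bijOn_insertCols (hn : 1 ≤ n) (k : ℕ) :
    Set.BijOn (fun S : ℕ × (ℕ → ℕ → ℕ) × (ℕ → ℕ → ℕ) =>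
        (blockStart (nonzeroCols S.2.2) (S.1 + 1), insertCols (nonzeroCols S.2.2) S.2.1 S.2.2))
      {S | IsHalfPair n k S.1 S.2.1 S.2.2} {T | IsColumnFishburn n k T.1 T.2} := by
  refine ⟨fun S hS => IsHalfPair.isColumnFishburn_insertCols hS, ?_, ?_⟩
  · rintro ⟨K, f, g⟩ hS ⟨K', f', g'⟩ hS' heq
    obtain ⟨hm, ht⟩ := Prod.mk.inj heq
    obtain ⟨rfl, rfl, rfl⟩ := IsHalfPair.eq_of_insertCols_eq hS hS' hm ht
    rfl
  · rintro ⟨m, t⟩ (hT : IsColumnFishburn n k m t)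
    have hm : 0 < m := Nat.pos_of_ne_zero fun hm => by
      have := hT.size
      simp only [hm, range_zero, sum_empty] at this
      omega
    obtain ⟨E, K, rfl, hE⟩ := hT.exists_isGreedySelection hm
    refine ⟨(K, oldCols E t, newCols E t), hT.isHalfPair hE, ?_⟩
    simp only [hT.nonzeroCols_newCols hE, insertCols_oldCols_newCols hE.row_eq_zero]

end Arrays

section Matrices

variable {m n k : ℕ} {M R : Mat m} {t : ℕ → ℕ → ℕ}

/-- The leading `m × m` block of an infinite array. -/
def toMat (m : ℕ) (t : ℕ → ℕ → ℕ) : Mat m := fun i j => t i j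

/-- The extension of a matrix to an infinite array by zero entries. -/
def extendByZero (M : Mat m) : ℕ → ℕ → ℕ :=
  fun i j => if h : i < m ∧ j < m then M ⟨i, h.1⟩ ⟨j, h.2⟩ else 0

theorem extendByZero_of_lt {i j : ℕ} (hi : i < m) (hj : j < m) :
    extendByZero M i j = M ⟨i, hi⟩ ⟨j, hj⟩ :=
  dif_pos ⟨hi, hj⟩

theorem toMat_extendByZero (M : Mat m) : toMat m (extendByZero M) = M := by
  ext i j
  exact extendByZero_of_lt i.2 j.2

theorem IsUpperArray.extendByZero_toMat (h : IsUpperArray m t) : extendByZero (toMat m t) = t := by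
  funext a b
  by_cases hab : a < m ∧ b < m
  · exact extendByZero_of_lt hab.1 hab.2
  · rw [extendByZero, dif_neg hab]
    by_contra hne
    have := h (Ne.symm hne)
    omega

theorem UT.isUpperArray_extendByZero (h : UT M) : IsUpperArray m (extendByZero M) := by
  intro a b hab
  obtain ⟨hlt, hne⟩ := dite_ne_right_iff.1 hab
  exact ⟨not_lt.1 fun hba => hne (h _ _ hba), hlt.2⟩

theorem IsUpperArray.ut_toMat (h : IsUpperArray m t) : UT (toMat m t) := by
  intro i j hij
  by_contra hne
  exact absurd (h hne).1 hij.not_ge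

theorem msize_toMat (m : ℕ) (t : ℕ → ℕ → ℕ) :
    msize (toMat m t) = ∑ i ∈ range m, ∑ j ∈ range m, t i j := by
  simp only [msize, toMat, Finset.sum_range]

theorem firstRowSum_toMat (m : ℕ) (t : ℕ → ℕ → ℕ) :
    firstRowSum (toMat m t) = ∑ j ∈ range m, t 0 j := by
  cases m with
  | zero => rfl
  | succ m => simp [firstRowSum, toMat, Finset.sum_range, Fin.sum_univ_succ (n := m)]

theorem IsUpperArray.colNonzero_toMat (h : IsUpperArray m t) (j : Fin m) :
    colNonzero (toMat m t) j ↔ ∃ a, t a j ≠ 0 :=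
  ⟨fun ⟨i, hi⟩ => ⟨i, hi⟩, fun ⟨a, ha⟩ => ⟨⟨a, (h ha).1.trans_lt j.2⟩, ha⟩⟩

theorem IsUpperArray.rowNonzero_toMat (h : IsUpperArray m t) (i : Fin m) :
    rowNonzero (toMat m t) i ↔ t i ≠ 0 :=
  ⟨fun ⟨j, hj⟩ => Function.ne_iff.2 ⟨j, hj⟩, fun hi =>
    let ⟨b, hb⟩ := Function.ne_iff.1 hi
    ⟨⟨b, (h hb).2⟩, hb⟩⟩

theorem IsUpperArray.isColumnFishburn_iff (h : IsUpperArray m t) :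
    IsColumnFishburn n k m t ↔ (∀ j, colNonzero (toMat m t) j) ∧
      msize (toMat m t) = n ∧ firstRowSum (toMat m t) = k := by
  rw [msize_toMat, firstRowSum_toMat]
  exact ⟨fun ht => ⟨fun j => (h.colNonzero_toMat j).2 (ht.col j j.2), ht.size, ht.first⟩,
    fun ht => ⟨h, fun b hb => (h.colNonzero_toMat ⟨b, hb⟩).1 (ht.1 _), ht.2.1, ht.2.2⟩⟩

theorem dual_dual (M : Mat m) : dual (dual M) = M := by
  ext i j
  simp only [dual, Fin.rev_rev]

theorem UT.dual (h : UT M) : UT (dual M) :=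
  fun _ _ hij => h _ _ (Fin.rev_lt_rev.2 hij)

theorem rowNonzero_dual {i : Fin m} : rowNonzero (dual M) i ↔ colNonzero M i.rev :=
  Fin.rev_surjective.exists.trans (by simp only [dual, Fin.rev_rev, colNonzero])

theorem msize_dual (M : Mat m) : msize (dual M) = msize M := by
  change ∑ i : Fin m, ∑ j : Fin m, M j.rev i.rev = ∑ i : Fin m, ∑ j : Fin m, M i j
  rw [sum_comm, ← Equiv.sum_comp Fin.revPerm]
  refine sum_congr rfl fun i _ => ?_
  rw [← Equiv.sum_comp Fin.revPerm]
  simp only [Fin.revPerm_apply, Fin.rev_rev]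

theorem lastColSum_dual (M : Mat m) : lastColSum (dual M) = firstRowSum M := by
  have hlast (i : Fin m) : (i.rev : ℕ) + 1 = m ↔ (i : ℕ) = 0 := by
    rw [Fin.val_rev]
    omega
  change ∑ i : Fin m, ∑ j : Fin m, (if (j : ℕ) + 1 = m then M j.rev i.rev else 0) =
    ∑ i : Fin m, ∑ j : Fin m, if (i : ℕ) = 0 then M i j else 0
  rw [sum_comm, ← Equiv.sum_comp Fin.revPerm]
  refine sum_congr rfl fun i _ => ?_
  rw [← Equiv.sum_comp Fin.revPerm]
  simp only [Fin.revPerm_apply, Fin.rev_rev, hlast]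

theorem dual_toMat_mem_RMset₂ (h : IsUpperArray m t) :
    (⟨m, dual (toMat m t)⟩ : SMat) ∈ RMset₂ n k ↔ IsColumnFishburn n k m t := by
  rw [h.isColumnFishburn_iff]
  have hrow : (∀ i, rowNonzero (dual (toMat m t)) i) ↔ ∀ j, colNonzero (toMat m t) j := by
    simp only [rowNonzero_dual]
    exact Fin.rev_surjective.forall.symm
  change (UT _ ∧ (∀ i, rowNonzero _ i) ∧ msize _ = n) ∧ lastColSum _ = k ↔ _
  rw [hrow, msize_dual, lastColSum_dual, and_iff_right h.ut_toMat.dual, and_assoc]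

theorem bijOn_dual_toMat (n k : ℕ) :
    Set.BijOn (fun T : ℕ × (ℕ → ℕ → ℕ) => (⟨T.1, dual (toMat T.1 T.2)⟩ : SMat))
      {T | IsColumnFishburn n k T.1 T.2} (RMset₂ n k) := by
  have hright (A : SMat) : (⟨A.1, dual (toMat A.1 (extendByZero (dual A.2)))⟩ : SMat) = A := by
    rw [toMat_extendByZero, dual_dual]
  refine Set.InvOn.bijOn (f' := fun A => (A.1, extendByZero (dual A.2)))
    ⟨fun T (hT : IsColumnFishburn n k T.1 T.2) => ?_, fun A _ => hright A⟩
    (fun T (hT : IsColumnFishburn n k T.1 T.2) => (dual_toMat_mem_RMset₂ hT.upper).2 hT)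
    (fun A hA => ?_)
  · exact Prod.ext rfl (by simp only [dual_dual, hT.upper.extendByZero_toMat])
  · have hUT : UT A.2 := hA.1.1
    refine (dual_toMat_mem_RMset₂ hUT.dual.isUpperArray_extendByZero).1 ?_
    rwa [hright]

/-- The self-dual matrix with given entries in the NW-cells and the diagonal cells. -/
def completion (R : Mat m) : Mat m :=
  fun i j => if (i : ℕ) + (j : ℕ) + 1 ≤ m then R i j else dual R i j

theorem rev_eq_of_diagonal {i j : Fin m} (h : (i : ℕ) + (j : ℕ) + 1 = m) : j.rev = i :=
  Fin.ext (by rw [Fin.val_rev]; omega)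

theorem selfDual_completion (R : Mat m) : SelfDual (completion R) := by
  ext i j
  have hrev : (j.rev : ℕ) + (i.rev : ℕ) + 1 ≤ m ↔ m ≤ (i : ℕ) + (j : ℕ) + 1 := by
    rw [Fin.val_rev, Fin.val_rev]
    omega
  simp only [completion, dual, hrev, Fin.rev_rev]
  rcases lt_trichotomy ((i : ℕ) + (j : ℕ) + 1) m with h | h | h
  · rw [if_pos h.le, if_neg h.not_ge]
  · rw [if_pos h.le, if_pos h.ge, rev_eq_of_diagonal h, ← rev_eq_of_diagonal h, Fin.rev_rev]
  · rw [if_neg h.not_ge, if_pos h.le]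

theorem completion_reduced (h : SelfDual M) : completion (reduced M) = M := by
  ext i j
  by_cases hij : (i : ℕ) + (j : ℕ) + 1 ≤ m
  · simp only [completion, reduced, if_pos hij]
  · have hrev : (j.rev : ℕ) + (i.rev : ℕ) + 1 ≤ m := by
      rw [Fin.val_rev, Fin.val_rev]
      omega
    simp only [completion, dual, reduced, if_neg hij, if_pos hrev]
    exact (congrFun (congrFun h i) j).symm

theorem reduced_completion (h : SuperTri R) : reduced (completion R) = R := by
  ext i j
  by_cases hij : (i : ℕ) + (j : ℕ) + 1 ≤ m
  · simp only [completion, reduced, if_pos hij]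
  · simp only [reduced, if_neg hij, h.2 i j (not_le.1 hij)]

theorem UT.superTri_reduced (h : UT M) : SuperTri (reduced M) :=
  ⟨fun i j hij => by simp only [reduced, h i j hij, ite_self], fun _ _ hij => if_neg hij.not_ge⟩

theorem UT.completion (h : UT R) : UT (completion R) := fun i j hij => by
  simp only [_root_.completion, h i j hij, h.dual i j hij, ite_self]

theorem firstRowSum_reduced (M : Mat m) : firstRowSum (reduced M) = firstRowSum M := by
  refine sum_congr rfl fun i _ => sum_congr rfl fun j _ => if_ctx_congr Iff.rfl (fun hi => ?_) ?_
  · exact if_pos (by omega)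
  · exact fun _ => rfl

theorem completion_ne_zero (h : SuperTri R) {i j : Fin m} :
    completion R i j ≠ 0 ↔ R i j ≠ 0 ∨ R j.rev i.rev ≠ 0 := by
  rcases lt_trichotomy ((i : ℕ) + (j : ℕ) + 1) m with hij | hij | hij
  · have hzero : R j.rev i.rev = 0 := h.2 _ _ (by rw [Fin.val_rev, Fin.val_rev]; omega)
    simp only [completion, if_pos hij.le, hzero, ne_eq, not_true, or_false]
  · have hi := rev_eq_of_diagonal hij
    have hj : i.rev = j := Fin.rev_eq_iff.2 hi.symm
    rw [completion, if_pos hij.le, hi, hj, or_self]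
  · simp only [completion, if_neg hij.not_ge, h.2 i j hij, dual, ne_eq, not_true, false_or]

theorem colNonzero_completion (h : SuperTri R) (j : Fin m) :
    colNonzero (completion R) j ↔ colNonzero R j ∨ rowNonzero R j.rev := by
  simp only [colNonzero, rowNonzero, completion_ne_zero h, exists_or]
  exact or_congr_right (Fin.rev_surjective.exists (p := fun a => R j.rev a ≠ 0)).symm

theorem SelfDual.rowNonzero_iff (h : SelfDual M) (i : Fin m) :
    rowNonzero M i ↔ colNonzero M i.rev := by
  conv_lhs => rw [h]
  exact rowNonzero_dual

/-- The reduced matrices of the elements of `OM(n,k)`. -/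
def reducedOMset (n k : ℕ) : Set SMat :=
  {A | SuperTri A.2 ∧ (∀ j, colNonzero A.2 j ∨ rowNonzero A.2 j.rev) ∧
    msize A.2 = n ∧ firstRowSum A.2 = k ∧ Odd A.1}

theorem completion_mem_OMset (hR : SuperTri R) :
    (⟨m, completion R⟩ : SMat) ∈ OMset n k ↔ (⟨m, R⟩ : SMat) ∈ reducedOMset n k := by
  have hsize : reducedSize (completion R) = msize R := congrArg msize (reduced_completion hR)
  have hfirst : firstRowSum (completion R) = firstRowSum R := by
    rw [← firstRowSum_reduced, reduced_completion hR]
  have hself := selfDual_completion R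
  have hfish : IsFishburn (completion R) ↔ ∀ j, colNonzero R j ∨ rowNonzero R j.rev := by
    simp only [IsFishburn, hself.rowNonzero_iff, ← colNonzero_completion hR]
    exact ⟨fun h => h.2.2, fun h => ⟨hR.1.completion, fun i => h i.rev, h⟩⟩
  change ((IsFishburn _ ∧ SelfDual _ ∧ reducedSize _ = n) ∧ firstRowSum _ = k) ∧ Odd m ↔
    SuperTri R ∧ (∀ j, colNonzero R j ∨ rowNonzero R j.rev) ∧ msize R = n ∧
      firstRowSum R = k ∧ Odd m
  rw [hsize, hfirst, hfish]
  tauto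

theorem bijOn_completion (n k : ℕ) :
    Set.BijOn (fun A : SMat => (⟨A.1, completion A.2⟩ : SMat)) (reducedOMset n k) (OMset n k) := by
  have hright (A : SMat) (hA : A ∈ OMset n k) : (⟨A.1, completion (reduced A.2)⟩ : SMat) = A := by
    rw [completion_reduced hA.1.1.2.1]
  refine Set.InvOn.bijOn (f' := fun A => ⟨A.1, reduced A.2⟩)
    ⟨fun A hA => ?_, hright⟩ (fun A hA => (completion_mem_OMset hA.1).2 hA) (fun A hA => ?_)
  · exact Sigma.ext rfl (heq_of_eq (reduced_completion hA.1))
  · have hUT : UT A.2 := hA.1.1.1.1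
    exact (completion_mem_OMset hUT.superTri_reduced).1 ((hright A hA).symm ▸ hA)

end Matrices

section Halves

variable {K n k : ℕ} {f g t : ℕ → ℕ → ℕ}

/-- The array of dimension `2 * K + 1` with left half `f` and right half `g`, the columns of `g`
being numbered from right to left. If `f` and `g` are upper-triangular of dimensions `K + 1` and
`K`, then no cell receives a nonzero entry from both halves. -/
def glue (K : ℕ) (f g : ℕ → ℕ → ℕ) : ℕ → ℕ → ℕ :=
  fun i j => f i j + if j ≤ 2 * K then g i (2 * K - j) else 0

/-- The array `f` of which `t = glue K f g` is made. -/
def leftHalf (K : ℕ) (t : ℕ → ℕ → ℕ) : ℕ → ℕ → ℕ :=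
  fun a b => if b ≤ K then t a b else 0

/-- The array `g` of which `t = glue K f g` is made. -/
def rightHalf (K : ℕ) (t : ℕ → ℕ → ℕ) : ℕ → ℕ → ℕ :=
  fun a b => if b < K then t a (2 * K - b) else 0

theorem glue_ne_zero {i j : ℕ} :
    glue K f g i j ≠ 0 ↔ f i j ≠ 0 ∨ j ≤ 2 * K ∧ g i (2 * K - j) ≠ 0 := by
  rw [glue, ne_eq, Nat.add_eq_zero_iff, not_and_or, ← ne_eq, ← ne_eq, ite_ne_right_iff]

theorem glue_row_ne_zero {i : ℕ} (hg : IsUpperArray K g) :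
    glue K f g i ≠ 0 ↔ f i ≠ 0 ∨ g i ≠ 0 := by
  simp only [Function.ne_iff, Pi.zero_apply, glue_ne_zero, exists_or]
  refine or_congr_right ⟨fun ⟨j, _, hj⟩ => ⟨_, hj⟩, fun ⟨b, hb⟩ => ⟨2 * K - b, by omega, ?_⟩⟩
  have hbK := (hg hb).2
  rwa [Nat.sub_sub_self (by omega)]

theorem mem_nonzeroCols_glue {j : ℕ} :
    j ∈ nonzeroCols (glue K f g) ↔
      j ∈ nonzeroCols f ∨ j ≤ 2 * K ∧ 2 * K - j ∈ nonzeroCols g := by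
  simp only [nonzeroCols, Set.mem_ofPred_eq, glue_ne_zero, exists_or, exists_and_left]

theorem isUpperArray_glue (hf : IsUpperArray (K + 1) f) (hg : IsUpperArray K g) :
    IsUpperArray (2 * K + 1) (glue K f g) := by
  intro i j hij
  rcases glue_ne_zero.1 hij with h | ⟨hj, h⟩
  · have := hf h
    omega
  · have := hg h
    omega

theorem superTri_toMat_glue (hf : IsUpperArray (K + 1) f) (hg : IsUpperArray K g) :
    SuperTri (toMat (2 * K + 1) (glue K f g)) := by
  refine ⟨(isUpperArray_glue hf hg).ut_toMat, fun i j hij => ?_⟩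
  by_contra hne
  rcases glue_ne_zero.1 hne with h | ⟨_, h⟩
  · have := hf h
    omega
  · have := hg h
    omega

theorem sum_glue (hf : IsUpperArray (K + 1) f) (hg : IsUpperArray K g) (i : ℕ) :
    ∑ j ∈ range (2 * K + 1), glue K f g i j = ∑ b ∈ range (K + 1), (f i b + g i b) := by
  calc
    _ = ∑ j ∈ range (2 * K + 1), (f i j + g i (2 * K - j)) := by
      refine sum_congr rfl fun j hj => ?_
      rw [glue, if_pos (mem_range_succ_iff.1 hj)]
    _ = ∑ b ∈ range (2 * K + 1), (f i b + g i b) := by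
      rw [sum_add_distrib, sum_add_distrib]
      exact congrArg _ (sum_range_reflect (g i) (2 * K + 1))
    _ = _ := by
      refine eventually_constant_sum (fun b hb => ?_) (by omega)
      rw [hf.eq_zero_of_le_col hb, hg.eq_zero_of_le_col (Nat.le_of_succ_le hb), add_zero]

theorem sum_sum_glue (hf : IsUpperArray (K + 1) f) (hg : IsUpperArray K g) :
    ∑ i ∈ range (2 * K + 1), ∑ j ∈ range (2 * K + 1), glue K f g i j =
      ∑ a ∈ range (K + 1), ∑ b ∈ range (K + 1), (f a b + g a b) := by
  simp only [sum_glue hf hg]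
  refine eventually_constant_sum (fun a ha => ?_) (by omega)
  rw [hf.eq_zero_of_le_row ha, hg.eq_zero_of_le_row (Nat.le_of_succ_le ha)]
  exact sum_const_zero

theorem IsUpperArray.mem_nonzeroCols_of_last_row_ne_zero (h : IsUpperArray (K + 1) t)
    (hK : t K ≠ 0) : K ∈ nonzeroCols t := by
  obtain ⟨b, hb⟩ := Function.ne_iff.1 hK
  obtain rfl : K = b := (h hb).1.antisymm (Nat.le_of_lt_succ (h hb).2)
  exact ⟨K, hb⟩

theorem forall_nonzeroCols_or_row_glue_iff (hf : IsUpperArray (K + 1) f) (hg : IsUpperArray K g) :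
    (∀ j ≤ 2 * K, j ∈ nonzeroCols (glue K f g) ∨ glue K f g (2 * K - j) ≠ 0) ↔
      (∀ b ≤ K, b ∈ nonzeroCols f) ∧ ∀ a < K, f a ≠ 0 ∨ g a ≠ 0 ∨ a ∈ nonzeroCols g := by
  have hcol {b : ℕ} : b ∈ nonzeroCols f → b ≤ K := fun ⟨_, h⟩ => Nat.le_of_lt_succ (hf h).2
  have hgcol {b : ℕ} : b ∈ nonzeroCols g → b < K := fun ⟨_, h⟩ => (hg h).2
  have hrow {a : ℕ} (ha : f a ≠ 0) : a ≤ K :=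
    Nat.le_of_lt_succ (not_le.1 (mt hf.eq_zero_of_le_row ha))
  have hgrow {a : ℕ} (ha : g a ≠ 0) : a < K := not_le.1 (mt hg.eq_zero_of_le_row ha)
  simp only [mem_nonzeroCols_glue, glue_row_ne_zero hg]
  refine ⟨fun h => ⟨fun b hb => ?_, fun a ha => ?_⟩, fun ⟨h₁, h₂⟩ j hj => ?_⟩
  · rcases h b (by omega) with (h | ⟨_, h⟩) | h | h
    · exact h
    · have := hgcol h
      omega
    · have := hrow h
      obtain rfl : b = K := by omega
      rw [two_mul, Nat.add_sub_cancel] at h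
      exact hf.mem_nonzeroCols_of_last_row_ne_zero h
    · have := hgrow h
      omega
  · have hj : 2 * K - (2 * K - a) = a := Nat.sub_sub_self (by omega)
    rcases h (2 * K - a) (Nat.sub_le _ _) with (h | ⟨_, h⟩) | h
    · have := hcol h
      omega
    · exact .inr (.inr (hj ▸ h))
    · exact (hj ▸ h).imp_right .inl
  · by_cases hjK : j ≤ K
    · exact .inl (.inl (h₁ j hjK))
    · rcases h₂ (2 * K - j) (by omega) with h | h | h
      · exact .inr (.inl h)
      · exact .inr (.inr h)
      · exact .inl (.inr ⟨hj, h⟩)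

theorem toMat_glue_mem_reducedOMset (hf : IsUpperArray (K + 1) f) (hg : IsUpperArray K g) :
    (⟨2 * K + 1, toMat (2 * K + 1) (glue K f g)⟩ : SMat) ∈ reducedOMset n k ↔
      IsHalfPair n k K f g := by
  have hup := isUpperArray_glue hf hg
  have hcells : (∀ j, colNonzero (toMat (2 * K + 1) (glue K f g)) j ∨
      rowNonzero (toMat (2 * K + 1) (glue K f g)) j.rev) ↔
      (∀ b ≤ K, b ∈ nonzeroCols f) ∧ ∀ a < K, f a ≠ 0 ∨ g a ≠ 0 ∨ a ∈ nonzeroCols g := by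
    rw [← forall_nonzeroCols_or_row_glue_iff hf hg]
    simp only [hup.colNonzero_toMat, hup.rowNonzero_toMat, Fin.val_rev, Fin.forall_iff,
      Nat.lt_succ_iff, Nat.add_sub_add_right]
    rfl
  change (SuperTri _ ∧ (∀ j, colNonzero _ j ∨ rowNonzero _ j.rev) ∧
    msize _ = n ∧ firstRowSum _ = k ∧ Odd (2 * K + 1)) ↔ _
  rw [hcells, msize_toMat, firstRowSum_toMat, sum_sum_glue hf hg, sum_glue hf hg]
  exact ⟨fun ⟨_, ⟨hcol, hrow⟩, hsize, hfirst, _⟩ => ⟨hf, hg, hcol, hrow, hsize, hfirst⟩,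
    fun h => ⟨superTri_toMat_glue hf hg, ⟨h.col, h.row⟩, h.size, h.first, odd_two_mul_add_one K⟩⟩

theorem leftHalf_glue (hf : IsUpperArray (K + 1) f) (hg : IsUpperArray K g) :
    leftHalf K (glue K f g) = f := by
  funext a b
  by_cases hb : b ≤ K
  · rw [leftHalf, if_pos hb, glue, hg.eq_zero_of_le_col (by omega), ite_self, add_zero]
  · rw [leftHalf, if_neg hb, hf.eq_zero_of_le_col (by omega)]

theorem rightHalf_glue (hf : IsUpperArray (K + 1) f) (hg : IsUpperArray K g) :
    rightHalf K (glue K f g) = g := by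
  funext a b
  by_cases hb : b < K
  · rw [rightHalf, if_pos hb, glue, hf.eq_zero_of_le_col (by omega), if_pos (Nat.sub_le _ _),
      Nat.sub_sub_self (by omega), zero_add]
  · rw [rightHalf, if_neg hb, hg.eq_zero_of_le_col (not_lt.1 hb)]

theorem glue_leftHalf_rightHalf (h : IsUpperArray (2 * K + 1) t) :
    glue K (leftHalf K t) (rightHalf K t) = t := by
  funext i j
  rcases le_or_gt j K with hj | hj
  · have hK : ¬ 2 * K - j < K := by omega
    rw [glue, leftHalf, rightHalf, if_pos hj, if_neg hK, ite_self, add_zero]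
  · rw [glue, leftHalf, if_neg hj.not_ge, zero_add]
    by_cases hjK : j ≤ 2 * K
    · have hK : 2 * K - j < K := by omega
      rw [if_pos hjK, rightHalf, if_pos hK, Nat.sub_sub_self hjK]
    · rw [if_neg hjK, h.eq_zero_of_le_col (not_le.1 hjK)]

theorem isUpperArray_leftHalf {m : ℕ} (h : IsUpperArray m t) :
    IsUpperArray (K + 1) (leftHalf K t) := by
  intro a b hab
  obtain ⟨hb, hne⟩ := ite_ne_right_iff.1 hab
  exact ⟨(h hne).1, Nat.lt_succ_of_le hb⟩

theorem isUpperArray_rightHalf (h : ∀ a b, t a b ≠ 0 → a + b ≤ 2 * K) :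
    IsUpperArray K (rightHalf K t) := by
  intro a b hab
  obtain ⟨hb, hne⟩ := ite_ne_right_iff.1 hab
  have := h _ _ hne
  omega

theorem SuperTri.add_lt_of_extendByZero_ne_zero {m a b : ℕ} {R : Mat m} (hR : SuperTri R)
    (hab : extendByZero R a b ≠ 0) : a + b < m := by
  obtain ⟨hlt, hne⟩ := dite_ne_right_iff.1 hab
  exact not_le.1 fun hge => hne (hR.2 ⟨a, hlt.1⟩ ⟨b, hlt.2⟩ (Nat.lt_succ_of_le hge))

theorem bijOn_toMat_glue (n k : ℕ) :
    Set.BijOn (fun S : ℕ × (ℕ → ℕ → ℕ) × (ℕ → ℕ → ℕ) =>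
        (⟨2 * S.1 + 1, toMat (2 * S.1 + 1) (glue S.1 S.2.1 S.2.2)⟩ : SMat))
      {S | IsHalfPair n k S.1 S.2.1 S.2.2} (reducedOMset n k) := by
  refine ⟨?_, ?_, ?_⟩
  · rintro ⟨K, f, g⟩ (hS : IsHalfPair n k K f g)
    exact (toMat_glue_mem_reducedOMset hS.left_upper hS.right_upper).2 hS
  · rintro ⟨K, f, g⟩ (hS : IsHalfPair n k K f g) ⟨K', f', g'⟩ (hS' : IsHalfPair n k K' f' g') heq
    obtain ⟨hK, hmat⟩ := Sigma.mk.inj heq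
    obtain rfl : K = K' := by simpa using hK
    have hglue : glue K f g = glue K f' g' := by
      rw [← (isUpperArray_glue hS.left_upper hS.right_upper).extendByZero_toMat, eq_of_heq hmat,
        (isUpperArray_glue hS'.left_upper hS'.right_upper).extendByZero_toMat]
    have hleft := congrArg (leftHalf K) hglue
    have hright := congrArg (rightHalf K) hglue
    rw [leftHalf_glue hS.left_upper hS.right_upper,
      leftHalf_glue hS'.left_upper hS'.right_upper] at hleft
    rw [rightHalf_glue hS.left_upper hS.right_upper,
      rightHalf_glue hS'.left_upper hS'.right_upper] at hright
    rw [hleft, hright]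
  · rintro ⟨m, R⟩ hR
    obtain ⟨hsuper, -, -, -, K, rfl⟩ := id hR
    have hup := hsuper.1.isUpperArray_extendByZero
    have hleft := isUpperArray_leftHalf (K := K) hup
    have hright := isUpperArray_rightHalf (K := K) fun a b hab =>
      Nat.le_of_lt_succ (hsuper.add_lt_of_extendByZero_ne_zero hab)
    have hglue : toMat (2 * K + 1)
        (glue K (leftHalf K (extendByZero R)) (rightHalf K (extendByZero R))) = R := by
      rw [glue_leftHalf_rightHalf hup, toMat_extendByZero]
    refine ⟨(K, leftHalf K (extendByZero R), rightHalf K (extendByZero R)),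
      (toMat_glue_mem_reducedOMset hleft hright).1 ?_, Sigma.ext rfl (heq_of_eq hglue)⟩
    rwa [hglue]

end Halves

/-- `|OM(n,k)| = |RM(n,k)|` for all `n ≥ 1`, `k ≥ 0`. -/
theorem stmt13 (n k : ℕ) (hn : 1 ≤ n) :
    (OMset n k).ncard = (RMset₂ n k).ncard := by
  calc
    (OMset n k).ncard = (reducedOMset n k).ncard := (bijOn_completion n k).ncard_eq.symm
    _ = {S : ℕ × (ℕ → ℕ → ℕ) × (ℕ → ℕ → ℕ) | IsHalfPair n k S.1 S.2.1 S.2.2}.ncard :=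
      (bijOn_toMat_glue n k).ncard_eq.symm
    _ = {T : ℕ × (ℕ → ℕ → ℕ) | IsColumnFishburn n k T.1 T.2}.ncard :=
      (bijOn_insertCols hn k).ncard_eq
    _ = (RMset₂ n k).ncard := (bijOn_dual_toMat n k).ncard_eq
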